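/- arXiv:2402.03938 — 4 statements merged into one kernel-verified Lean document; each statement's English description precedes it below -/
import Mathlib

section
/- For any polynomial f in A_{q^v}(r_1,…,r_s) with coefficient hypermatrix M(f), the apparent distance of the polynomial f equals the apparent distance of the hypermatrix M(f): d*(f) = d*(M(f)). -/
open Classical

noncomputable section

namespace AbelianCodes

/-- The index set `I = Z_{r 0} × ⋯ × Z_{r (s-1)}`. -/
abbrev Idx {s : ℕ} (r : Fin s → ℕ) : Type := ∀ k, ZMod (r k)

variable {F : Type*} [Field F]

/-- The support of a hypermatrix. -/
def hsupp {s : ℕ} {r : Fin s → ℕ} (M : Idx r → F) : Set (Idx r) := {i | M i ≠ 0}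

/-- The hypercolumn `H_M(k,b)` of a hypermatrix, viewed as an `(s-1)`-dimensional
hypermatrix indexed by `∏_{j ≠ k} Z_{r j}`. -/
def hypercol {s : ℕ} {r : Fin (s+1) → ℕ} (M : Idx r → F) (k : Fin (s+1)) (b : ZMod (r k)) :
    Idx (fun j => r (k.succAbove j)) → F :=
  fun i => M (k.insertNth b i)

/-- `ω_M(k,b)`: the number of consecutive zero hypercolumns
`H_M(k,b+1), H_M(k,b+2), …` (indices modulo `r k`). -/
def runLen {s : ℕ} {r : Fin (s+1) → ℕ} (M : Idx r → F) (k : Fin (s+1)) (b : ZMod (r k)) : ℕ :=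
  ((Finset.Ico 1 (r k)).filter
    (fun j => ∀ m : ℕ, m ∈ Finset.Icc 1 j → hypercol M k (b + (m : ZMod (r k))) = 0)).card

/-- The apparent distance `d*(M)` of a hypermatrix, defined recursively on the
number of variables.  (A `0`-dimensional hypermatrix is a scalar, of apparent
distance `1` if nonzero and `0` otherwise; with this convention the `1`-dimensional
case becomes `max {ω_M(b)+1 : a_b ≠ 0}` and the higher-dimensional case becomes
`max_k max {(ω_M(k,b)+1)·d*(H_M(k,b)) : H_M(k,b) ≠ 0}`, since zero hypermatrices
have apparent distance `0`.) -/
def apd : {s : ℕ} → (r : Fin s → ℕ) → (Idx r → F) → ℕ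
  | 0, _, M => if M finZeroElim = 0 then 0 else 1
  | _+1, r, M =>
      Finset.univ.sup fun k =>
        Finset.univ.sup fun b : Fin (r k) =>
          (runLen M k ((b : ℕ) : ZMod (r k)) + 1) *
            apd (fun j => r (k.succAbove j)) (hypercol M k ((b : ℕ) : ZMod (r k)))

/-- The `q^t`-orbit `Q_t(a)` of `a ∈ I`. -/
def qOrbit {s : ℕ} (r : Fin s → ℕ) (q t : ℕ) (a : Idx r) : Set (Idx r) :=
  {i | ∃ n : ℕ, ∀ k, i k = (q : ZMod (r k)) ^ (t * n) * a k}

/-- `D` is a union of `q^t`-orbits. -/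
def OrbitUnion {s : ℕ} (r : Fin s → ℕ) (q t : ℕ) (D : Set (Idx r)) : Prop :=
  ∀ a ∈ D, qOrbit r q t a ⊆ D

/-- The hypermatrix afforded by `D ⊆ I`: entry `0` at indices in `D`, entry `1` elsewhere. -/
def afforded {s : ℕ} (r : Fin s → ℕ) (D : Set (Idx r)) : Idx r → F :=
  fun i => if i ∈ D then 0 else 1

/-- `M` is a `q^t`-orbits hypermatrix, i.e. the hypermatrix afforded by some union
of `q^t`-orbits. -/
def IsOrbitMx {s : ℕ} (r : Fin s → ℕ) (q t : ℕ) (M : Idx r → F) : Prop :=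
  ∃ D : Set (Idx r), OrbitUnion r q t D ∧ M = afforded r D

/-- The minimum apparent distance `mad(M) = min {d*(P) : P a q^t-orbits hypermatrix,
`0 ≠ P ≤ M`}`, where `P ≤ M` means `supp P ⊆ supp M`. -/
def mad {s : ℕ} (r : Fin s → ℕ) (q t : ℕ) (M : Idx r → F) : ℕ :=
  sInf {d | ∃ P : Idx r → F, IsOrbitMx r q t P ∧ P ≠ 0 ∧ hsupp P ⊆ hsupp M ∧ apd r P = d}

/-- The `q^t`-cyclotomic coset of `b` modulo `r`. -/
def cycCoset (r q t : ℕ) (b : ZMod r) : Set (ZMod r) :=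
  {x | ∃ n : ℕ, x = (q : ZMod r) ^ (t * n) * b}


/-- The degree in the variable `x k` of a (reduced) polynomial with coefficient
function `g`. -/
def pdeg {L : Type*} [Field L] {s : ℕ} {r : Fin s → ℕ} (g : Idx r → L) (k : Fin s) : ℕ :=
  sSup {d | ∃ i, g i ≠ 0 ∧ (i k).val = d}

/-- The apparent distance `d*(f)` of a polynomial `f ∈ A_{q^v}(r_1,…,r_s)`, given by
its coefficient function:  `d*(0) = 0`; a nonzero constant (`s = 0`) has apparent
distance `1`; and for `s ≥ 1`,
`d*(f) = max_{h ∈ I} max_k d*(c_k[h]) · (r_k − d_k[h])`, where `d_k[h]` is the degree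
in `x k` of `X^h · f` (reduced modulo `⟨x_j^{r_j} − 1⟩`, i.e. of the shifted
coefficient function `i ↦ f (i − h)`) and `c_k[h]` is the coefficient of
`x_k^{d_k[h]}` therein.  (With the convention `d*` of a nonzero constant is `1`, the
`s = 1` case gives `max_h (r − d[h])`, as in Camion's definition.) -/
def pApd {L : Type*} [Field L] : {s : ℕ} → (r : Fin s → ℕ) → (Idx r → L) → ℕ
  | 0, _, f => if f finZeroElim = 0 then 0 else 1
  | s+1, r, f =>
      sSup {d | ∃ (h : Idx r) (k : Fin (s+1)), d =
        (r k - pdeg (fun i => f (i - h)) k) *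
          pApd (fun j => r (k.succAbove j))
            (hypercol (fun i => f (i - h)) k ((pdeg (fun i => f (i - h)) k : ZMod (r k))))}

/-!
For `h ∈ I`, `k` and `d < r k`, the polynomial `X^h f` has degree at most `d` in `x k` exactly when
the `r k - 1 - d` hypercolumns of `M(f)` following `H_{M(f)}(k, d - h k)` vanish. Hence the factor
`r k - d_k[h]` is at most `ω + 1` for the run following `H_{M(f)}(k, d_k[h] - h k)`, and every run
following a nonzero hypercolumn is realised by shifting it to the top degrees. As the apparent
distance of a polynomial is invariant under multiplication by monomials, the coefficient `c_k[h]`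
can be replaced by the hypercolumn itself, and induction on the number of variables compares the
two maxima.
-/

section Monomial

variable {α : Type*} {s : ℕ} {r : Fin s → ℕ}

/-- The coefficient function of `X^h f` reduced modulo `⟨x_j^{r_j} − 1⟩`, for `f` given by its
coefficient function: multiplication by the monomial `X^h` translates the indices by `h`. -/
def monomialMul (h : Idx r) (f : Idx r → α) : Idx r → α :=
  fun i => f (i - h)

theorem monomialMul_monomialMul (h h' : Idx r) (f : Idx r → α) :
    monomialMul h (monomialMul h' f) = monomialMul (h + h') f := by
  funext i
  simp only [monomialMul, sub_sub]

theorem monomialMul_eq_zero_iff [Zero α] {h : Idx r} {f : Idx r → α} :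
    monomialMul h f = 0 ↔ f = 0 := by
  simp only [funext_iff]
  exact (Equiv.subRight h).forall_congr fun _ => Iff.rfl

end Monomial

section Hypercol

variable {α : Type*} {s : ℕ} {r : Fin (s + 1) → ℕ}

theorem hypercol_zero [Zero α] (k : Fin (s + 1)) (b : ZMod (r k)) :
    hypercol (0 : Idx r → α) k b = 0 :=
  rfl

theorem hypercol_eq_zero_iff [Zero α] {M : Idx r → α} {k : Fin (s + 1)} {b : ZMod (r k)} :
    hypercol M k b = 0 ↔ ∀ i, i k = b → M i = 0 := by
  constructor
  · rintro hM i rfl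
    have hi := congrFun hM (k.removeNth i)
    rwa [hypercol, Fin.insertNth_self_removeNth] at hi
  · intro hM
    funext i
    exact hM _ (Fin.insertNth_apply_same (α := fun j => ZMod (r j)) k b i)

theorem hypercol_monomialMul (h : Idx r) (f : Idx r → α) (k : Fin (s + 1)) (b : ZMod (r k)) :
    hypercol (monomialMul h f) k b = monomialMul (k.removeNth h) (hypercol f k (b - h k)) := by
  funext i
  simp only [hypercol, monomialMul]
  congr 1
  rw [Fin.eq_insertNth_iff]
  exact ⟨by simp, by ext; simp [Fin.removeNth]⟩

theorem hypercol_monomialMul_eq_zero_iff [Zero α] {h : Idx r} {f : Idx r → α} {k : Fin (s + 1)}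
    {b : ZMod (r k)} : hypercol (monomialMul h f) k b = 0 ↔ hypercol f k (b - h k) = 0 := by
  rw [hypercol_monomialMul, monomialMul_eq_zero_iff]

end Hypercol

section Run

-- The instance is implicit because inference finds another one than that inside `runLen`.
theorem le_card_filter_Ico_one_iff {P : ℕ → Prop} {_ : DecidablePred P} (hP : Antitone P) (h₀ : P 0)
    {n N : ℕ} (hn : n < N) : n ≤ ((Finset.Ico 1 N).filter P).card ↔ P n := by
  constructor
  · contrapose!
    intro hPn
    have hsub : (Finset.Ico 1 N).filter P ⊆ Finset.Ico 1 n := by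
      intro j hj
      rw [Finset.mem_filter, Finset.mem_Ico] at hj
      exact Finset.mem_Ico.mpr ⟨hj.1.1, not_le.mp fun hnj => hPn (hP hnj hj.2)⟩
    have hpos : 0 < n := Nat.pos_of_ne_zero fun hn₀ => hPn (hn₀ ▸ h₀)
    calc
      ((Finset.Ico 1 N).filter P).card ≤ (Finset.Ico 1 n).card := Finset.card_le_card hsub
      _ = n - 1 := Nat.card_Ico 1 n
      _ < n := Nat.sub_lt hpos one_pos
  · intro hPn
    have hsub : Finset.Icc 1 n ⊆ (Finset.Ico 1 N).filter P := by
      intro j hj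
      rw [Finset.mem_Icc] at hj
      exact Finset.mem_filter.mpr ⟨Finset.mem_Ico.mpr ⟨hj.1, hj.2.trans_lt hn⟩, hP hj.2 hPn⟩
    simpa only [Nat.card_Icc, Nat.add_sub_cancel] using Finset.card_le_card hsub

variable {s : ℕ} {r : Fin (s + 1) → ℕ} {k : Fin (s + 1)}

theorem runLen_lt [NeZero (r k)] (M : Idx r → F) (b : ZMod (r k)) : runLen M k b < r k := by
  calc
    runLen M k b ≤ (Finset.Ico 1 (r k)).card := by simp only [runLen, Finset.card_filter_le]
    _ = r k - 1 := Nat.card_Ico 1 (r k)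
    _ < r k := Nat.sub_lt (NeZero.pos (r k)) one_pos

theorem le_runLen_iff {M : Idx r → F} {b : ZMod (r k)} {n : ℕ} (hn : n < r k) :
    n ≤ runLen M k b ↔ ∀ m : ℕ, m ∈ Finset.Icc 1 n → hypercol M k (b + m) = 0 :=
  le_card_filter_Ico_one_iff
    (P := fun j => ∀ m : ℕ, m ∈ Finset.Icc 1 j → hypercol M k (b + m) = 0)
    (fun _ _ hij hzero m hm => hzero m (Finset.Icc_subset_Icc_right hij hm)) (by simp) hn

end Run

section Degree

variable {s : ℕ} {r : Fin (s + 1) → ℕ} {k : Fin (s + 1)} [NeZero (r k)]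

theorem pdeg_le_iff {g : Idx r → F} {n : ℕ} :
    pdeg g k ≤ n ↔ ∀ b : ZMod (r k), n < b.val → hypercol g k b = 0 := by
  have hbdd : BddAbove {d | ∃ i, g i ≠ 0 ∧ (i k).val = d} := by
    refine ⟨r k, ?_⟩
    rintro d ⟨i, -, rfl⟩
    exact (ZMod.val_lt _).le
  rw [pdeg, csSup_le_iff' hbdd]
  simp only [hypercol_eq_zero_iff]
  constructor
  · rintro hle b hb i rfl
    by_contra hi
    exact hb.not_ge (hle _ ⟨i, hi, rfl⟩)
  · rintro hzero _ ⟨i, hi, rfl⟩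
    exact not_lt.mp fun hlt => hi (hzero _ hlt i rfl)

theorem pdeg_lt (g : Idx r → F) : pdeg g k < r k := by
  have hle : pdeg g k ≤ r k - 1 :=
    pdeg_le_iff.mpr fun b hb => absurd b.val_lt (by omega)
  have hpos := NeZero.pos (r k)
  omega

theorem le_pdeg {g : Idx r → F} {b : ZMod (r k)} (hb : hypercol g k b ≠ 0) : b.val ≤ pdeg g k :=
  not_lt.mp fun hlt => hb (pdeg_le_iff.mp le_rfl b hlt)

theorem pdeg_monomialMul_le_iff {f : Idx r → F} {h : Idx r} {d : ℕ} (hd : d < r k) :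
    pdeg (monomialMul h f) k ≤ d ↔ r k - 1 - d ≤ runLen f k (d - h k) := by
  rw [le_runLen_iff (by omega), pdeg_le_iff]
  simp only [hypercol_monomialMul_eq_zero_iff, Finset.mem_Icc]
  constructor
  · intro hzero m hm
    have hval : ((d + m : ℕ) : ZMod (r k)).val = d + m := ZMod.val_natCast_of_lt (by omega)
    have hcol := hzero (d + m : ℕ) (by omega)
    rwa [Nat.cast_add, add_sub_right_comm] at hcol
  · intro hzero b hb
    have hlt := b.val_lt
    have hcol := hzero (b.val - d) (by omega)
    rwa [Nat.cast_sub hb.le, ZMod.natCast_zmod_val, sub_add_sub_comm, add_comm,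
      add_sub_add_right_eq_sub] at hcol

theorem sub_pdeg_monomialMul_le_runLen (f : Idx r → F) (h : Idx r) :
    r k - pdeg (monomialMul h f) k ≤ runLen f k (pdeg (monomialMul h f) k - h k) + 1 := by
  have hrun := (pdeg_monomialMul_le_iff (f := f) (h := h) (k := k) (pdeg_lt _)).mp le_rfl
  omega

theorem exists_pdeg_monomialMul_eq {f : Idx r → F} {b : ZMod (r k)} (hb : hypercol f k b ≠ 0) :
    ∃ h : Idx r, (pdeg (monomialMul h f) k : ZMod (r k)) - h k = b ∧
      r k - pdeg (monomialMul h f) k = runLen f k b + 1 := by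
  have hlt := runLen_lt f b
  obtain ⟨d, hd⟩ : ∃ d, d = r k - 1 - runLen f k b := ⟨_, rfl⟩
  let h : Idx r := Pi.single k (d - b)
  have hdb : (d : ZMod (r k)) - h k = b := by
    rw [show h k = d - b from Pi.single_eq_same .., sub_sub_cancel]
  have hdeg : pdeg (monomialMul h f) k = d := by
    refine le_antisymm ((pdeg_monomialMul_le_iff (by omega)).mpr ?_) ?_
    · rw [hdb]
      omega
    · rw [← ZMod.val_natCast_of_lt (show d < r k by omega)]
      exact le_pdeg (by rwa [Ne, hypercol_monomialMul_eq_zero_iff, hdb])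
  refine ⟨h, ?_, ?_⟩
  · rw [hdeg, hdb]
  · omega

end Degree

section ApparentDistance

theorem apd_le_iff {s : ℕ} {r : Fin (s + 1) → ℕ} [∀ k, NeZero (r k)] {M : Idx r → F} {n : ℕ} :
    apd r M ≤ n ↔ ∀ k (b : ZMod (r k)),
      (runLen M k b + 1) * apd (fun j => r (k.succAbove j)) (hypercol M k b) ≤ n := by
  simp only [apd, Finset.sup_le_iff, Finset.mem_univ, true_imp_iff]
  refine forall_congr' fun k => ⟨fun hle b => ?_, fun hle b => hle b⟩
  simpa only [ZMod.natCast_zmod_val] using hle ⟨b.val, b.val_lt⟩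

theorem apd_zero : ∀ {s : ℕ} (r : Fin s → ℕ), apd r (0 : Idx r → F) = 0
  | 0, _ => if_pos rfl
  | s + 1, r => by
    simp only [apd, hypercol_zero, apd_zero, mul_zero]
    exact (Finset.sup_congr rfl fun _ _ => Finset.sup_bot _).trans (Finset.sup_bot _)

theorem pApd_eq_iSup {s : ℕ} (r : Fin (s + 1) → ℕ) (f : Idx r → F) :
    pApd r f = ⨆ p : Idx r × Fin (s + 1),
      (r p.2 - pdeg (monomialMul p.1 f) p.2) * pApd (fun j => r (p.2.succAbove j))
        (hypercol (monomialMul p.1 f) p.2 (pdeg (monomialMul p.1 f) p.2)) := by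
  rw [pApd, iSup]
  congr 1
  ext d
  simp only [Set.mem_range, Prod.exists, Set.mem_ofPred_eq, eq_comm (a := d)]
  rfl

theorem pApd_monomialMul {s : ℕ} (r : Fin s → ℕ) (h : Idx r) (f : Idx r → F) :
    pApd r (monomialMul h f) = pApd r f := by
  cases s with
  | zero => exact congrArg (pApd r) (funext fun i => congrArg f (Subsingleton.elim _ _))
  | succ s =>
    rw [pApd_eq_iSup, pApd_eq_iSup]
    refine ((Equiv.addRight h).prodCongr (Equiv.refl _)).iSup_congr fun p => ?_
    rw [monomialMul_monomialMul]
    rfl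

theorem pApd_le_iff {s : ℕ} {r : Fin (s + 1) → ℕ} [∀ k, NeZero (r k)] {f : Idx r → F} {n : ℕ} :
    pApd r f ≤ n ↔ ∀ (h : Idx r) (k : Fin (s + 1)),
      (r k - pdeg (monomialMul h f) k) * pApd (fun j => r (k.succAbove j))
        (hypercol f k (pdeg (monomialMul h f) k - h k)) ≤ n := by
  rw [pApd_eq_iSup, ciSup_le_iff' (Set.finite_range _).bddAbove, Prod.forall]
  simp only [hypercol_monomialMul, pApd_monomialMul]

theorem apparentDistance_polynomial_eq_hypermatrix_general {s : ℕ} (r : Fin s → ℕ)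
    [∀ k, NeZero (r k)] (f : Idx r → F) : pApd r f = apd r f := by
  induction s with
  | zero => rfl
  | succ s ih =>
    refine eq_of_forall_ge_iff fun n => ?_
    simp only [pApd_le_iff, ih]
    constructor
    · intro hle
      refine apd_le_iff.mpr fun k b => ?_
      by_cases hb : hypercol f k b = 0
      · rw [hb, apd_zero, mul_zero]
        exact n.zero_le
      · obtain ⟨h, hdb, hrun⟩ := exists_pdeg_monomialMul_eq hb
        simpa only [hdb, hrun] using hle h k
    · intro hle h k
      have hrun := sub_pdeg_monomialMul_le_runLen (k := k) f h
      exact (Nat.mul_le_mul_right _ hrun).trans (apd_le_iff.mp hle k _)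

end ApparentDistance

/-- For any polynomial `f ∈ A_{q^v}(r_1,…,r_s)` with coefficient
hypermatrix `M(f)` (which, in the coefficient-function picture, is `f` itself),
the apparent distance of the polynomial equals the apparent distance of its
coefficient hypermatrix: `d*(f) = d*(M(f))`. -/
theorem apparentDistance_polynomial_eq_hypermatrix
    {s : ℕ} (r : Fin s → ℕ) (hr : ∀ k, 0 < r k)
    (p m v : ℕ) (hp : p.Prime) (hm : 0 < m) (hv : 0 < v)
    {L : Type*} [Field L] [Fintype L] (hcard : Fintype.card L = (p ^ m) ^ v)
    (hpr : ∀ k, ¬ p ∣ r k)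
    (f : Idx r → L) :
    pApd r f = apd r f := by
  have (k : Fin s) : NeZero (r k) := .of_pos (hr k)
  exact apparentDistance_polynomial_eq_hypermatrix_general r f

end AbelianCodes
end
end

section
/- (Camion) For any abelian code C in A_q(r_1,…,r_s), the apparent distance of C is a lower bound for its minimum distance: d*(C) ≤ d(C). -/
open Classical

noncomputable section

namespace AbelianCodes

variable {F : Type*} [Field F]

variable {F : Type*} [Field F] {L : Type*} [Field L] [Algebra F L]

/-- An abelian code: a subspace of the group algebra `F[∏ Z_{r k}]` (identified
with the space of coefficient functions `I → F`) which is closed under all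
translations, i.e. an ideal. -/
def IsAbelianCode {s : ℕ} {r : Fin s → ℕ} (C : Submodule F (Idx r → F)) : Prop :=
  ∀ f ∈ C, ∀ a : Idx r, (fun i => f (i - a)) ∈ C

/-- Convolution: the multiplication of the group algebra in the coefficient
function picture. -/
def conv {s : ℕ} {r : Fin s → ℕ} [∀ k, NeZero (r k)] (f g : Idx r → F) : Idx r → F :=
  fun i => ∑ u : Idx r, f u * g (i - u)

/-- The (discrete) Fourier transform `φ_{α,f}(j) = f(α^j)` of a coefficient
function `f : I → F` with respect to `α`, with values in the extension `L`. -/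
def fourier {s : ℕ} {r : Fin s → ℕ} [∀ k, NeZero (r k)] (α : Fin s → L) (f : Idx r → F) :
    Idx r → L :=
  fun j => ∑ i : Idx r, algebraMap F L (f i) * ∏ k, α k ^ ((i k).val * (j k).val)

/-- The Hamming weight of a codeword. -/
def wt {s : ℕ} {r : Fin s → ℕ} [∀ k, NeZero (r k)] (f : Idx r → F) : ℕ :=
  (Finset.univ.filter fun i : Idx r => f i ≠ 0).card

/-- The minimum distance of a code. -/
def dmin {s : ℕ} {r : Fin s → ℕ} [∀ k, NeZero (r k)] (C : Submodule F (Idx r → F)) : ℕ :=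
  sInf {w | ∃ f ∈ C, f ≠ (0 : Idx r → F) ∧ wt f = w}

/-- The defining set `D_α(C) = {a ∈ I : f(α^a) = 0 for all f ∈ C}`. -/
def defSet {s : ℕ} (r : Fin s → ℕ) [∀ k, NeZero (r k)] (α : Fin s → L)
    (C : Submodule F (Idx r → F)) : Set (Idx r) :=
  {a | ∀ f ∈ C, fourier α f a = 0}

/-- The apparent distance of a code `C` with respect to `α`:
`d_α*(C) = min {d*(M(φ_{α,e})) : 0 ≠ e = e² ∈ C}`. -/
def dStarAlpha {s : ℕ} (r : Fin s → ℕ) [∀ k, NeZero (r k)] (α : Fin s → L)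
    (C : Submodule F (Idx r → F)) : ℕ :=
  sInf {d | ∃ e, e ∈ C ∧ e ≠ (0 : Idx r → F) ∧ conv e e = e ∧ apd r (fourier α e) = d}

/-- The apparent distance of a code: `d*(C) = max {d_β*(C) : β ∈ U}`, where `U`
is the set of tuples of primitive roots of unity in `L`. -/
def dStarCode {s : ℕ} (r : Fin s → ℕ) [∀ k, NeZero (r k)] (L : Type*) [Field L] [Algebra F L]
    (C : Submodule F (Idx r → F)) : ℕ :=
  sSup {d | ∃ α : Fin s → L, (∀ k, IsPrimitiveRoot (α k) (r k)) ∧ dStarAlpha r α C = d}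

/-- The defining set of the multivariate BCH code `B_q(α,γ,δ,b)`:
`∪_{k∈γ} ∪_{l=0}^{δ_k−2} ∪_{i ∈ I(k, b_k+l)} Q(i)`. -/
def bchDefSet {s : ℕ} (r : Fin s → ℕ) (q : ℕ) (γ : Finset (Fin s)) (δ b : Fin s → ℕ) :
    Set (Idx r) :=
  ⋃ k ∈ γ, ⋃ l ∈ Finset.range (δ k - 1),
    ⋃ i ∈ {i : Idx r | i k = ((b k + l : ℕ) : ZMod (r k))}, qOrbit r q 1 i

/-!
The Fourier transform is evaluated one variable at a time. Transforming a word only along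
direction `k` and then along the others shows that the hypercolumns of its transform are the
transforms of the partially transformed word. Along a single line of direction `k` the BCH bound
holds: a nonzero value of a cyclic transform followed by `w` zeros forces at least `w + 1` nonzero
coefficients. Since the transform is injective (characters are linearly independent), `w` zero
hypercolumns provide such zeros on all lines at once, and induction on the number of variables
yields `d*(φ_{α,f}) ≤ wt f`.

The apparent distance only sees the support of a hypermatrix, so it remains to find in `C` an
idempotent whose transform has the support of `φ_{α,f}`. The transform turns convolution into
the pointwise product, and `x = φ_{α,f}` is algebraic over `F` because characters are roots of
unity. In a reduced algebra such an `x` satisfies `x² p(x) = x` for some polynomial `p`, so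
`x p(x)` is idempotent, has the support of `x`, and is the transform of a word of `C`.
-/

open Polynomial

section Algebra

theorem exists_sq_mul_aeval_eq_self {K R : Type*} [Field K] [CommRing R] [IsReduced R]
    [Algebra K R] {x : R} (hx : IsAlgebraic K x) : ∃ p : K[X], x ^ 2 * aeval x p = x := by
  obtain ⟨P, hP, hPx⟩ := hx
  obtain ⟨q, hPq, hq⟩ := P.exists_eq_pow_rootMultiplicity_mul_and_not_dvd hP 0
  rw [C_0, sub_zero] at hPq hq
  set n := P.rootMultiplicity 0
  have hc : q.coeff 0 ≠ 0 := fun h => hq (X_dvd_iff.2 h)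
  have hxq : x ^ n * aeval x q = 0 := by simpa [hPq] using hPx
  have hred : x * aeval x q = 0 := by
    refine IsReduced.eq_zero _ ⟨n + 1, ?_⟩
    linear_combination x * aeval x q ^ n * hxq
  have hdivX : aeval x q = aeval x q.divX * x + algebraMap K R (q.coeff 0) := by
    conv_lhs => rw [← q.divX_mul_X_add]
    simp only [map_add, map_mul, aeval_X, aeval_C]
  have hinv : algebraMap K R (q.coeff 0)⁻¹ * algebraMap K R (q.coeff 0) = 1 := by
    rw [← map_mul, inv_mul_cancel₀ hc, map_one]
  refine ⟨-C (q.coeff 0)⁻¹ * q.divX, ?_⟩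
  simp only [map_mul, map_neg, aeval_C]
  linear_combination algebraMap K R (q.coeff 0)⁻¹ * (x * hdivX - hred) + x * hinv

theorem lt_card_of_sum_mul_pow_eq_zero {ι R : Type*} [CommRing R] [IsDomain R] (S : Finset ι)
    (a β : ι → R) (hβ : ∀ c ∈ S, β c ≠ 0) {w : ℕ} (h0 : ∑ c ∈ S, a c ≠ 0)
    (hz : ∀ m ∈ Finset.Icc 1 w, ∑ c ∈ S, a c * β c ^ m = 0) : w < S.card := by
  by_contra! hlt
  set P : R[X] := ∏ c ∈ S, (X - C (β c))
  have hdeg : P.natDegree < w + 1 := by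
    rw [natDegree_finsetProd_X_sub_C_eq_card]
    omega
  have hroot : ∀ c ∈ S, P.eval (β c) = 0 := fun c hc => by
    rw [eval_prod, Finset.prod_eq_zero hc (by simp)]
  have hcoeff : P.coeff 0 ≠ 0 := by
    simpa [P, coeff_zero_eq_eval_zero, eval_prod, Finset.prod_eq_zero_iff] using hβ
  refine mul_ne_zero hcoeff h0 ?_
  calc P.coeff 0 * ∑ c ∈ S, a c
      = ∑ m ∈ Finset.range (w + 1), P.coeff m * ∑ c ∈ S, a c * β c ^ m := by
        have hpos : ∀ m ∈ Finset.range w,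
            P.coeff (m + 1) * ∑ c ∈ S, a c * β c ^ (m + 1) = 0 := fun m hm => by
          rw [hz _ (by simpa using hm), mul_zero]
        rw [Finset.sum_range_succ', Finset.sum_eq_zero hpos, zero_add]
        simp only [pow_zero, mul_one]
    _ = ∑ c ∈ S, a c * P.eval (β c) := by
        simp_rw [eval_eq_sum_range' hdeg, Finset.mul_sum]
        rw [Finset.sum_comm]
        simp only [mul_left_comm]
    _ = 0 := Finset.sum_eq_zero fun c hc => by rw [hroot c hc, mul_zero]

end Algebra

section AddChar

theorem linearIndependent_addChar (G R : Type*) [AddMonoid G] [CommRing R] [IsDomain R] :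
    LinearIndependent R fun ψ : AddChar G R => (ψ : G → R) :=
  (linearIndependent_monoidHom (Multiplicative G) R).comp _
    AddChar.toMonoidHomEquiv.injective

theorem isIntegral_addChar (K : Type*) {G R : Type*} [AddGroup G] [Finite G] [CommRing K]
    [CommRing R] [Algebra K R] (ψ : AddChar G R) : IsIntegral K (ψ : G → R) := by
  refine IsIntegral.of_pow Nat.card_pos (?_ : IsIntegral K ((ψ : G → R) ^ Nat.card G))
  have hpow : (ψ : G → R) ^ Nat.card G = 1 := by
    funext x
    rw [Pi.pow_apply, ← AddChar.map_nsmul_eq_pow, card_nsmul_eq_zero', AddChar.map_zero_eq_one,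
      Pi.one_apply]
  rw [hpow]
  exact isIntegral_one

theorem lt_card_support_of_sum_mul_addChar_eq_zero {A R : Type*} [Ring A] [Fintype A]
    [CommRing R] [IsDomain R] (ψ : AddChar A R) (g : A → R) (b : A) {w : ℕ}
    (h0 : ∑ c, g c * ψ (c * b) ≠ 0)
    (hz : ∀ m ∈ Finset.Icc 1 w, ∑ c, g c * ψ (c * (b + (m : A))) = 0) :
    w < (Finset.univ.filter fun c => g c ≠ 0).card := by
  have hfilter (h : A → R) : ∑ c with g c ≠ 0, g c * h c = ∑ c, g c * h c :=
    Finset.sum_filter_of_ne fun c _ hc => left_ne_zero_of_mul hc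
  refine lt_card_of_sum_mul_pow_eq_zero _ (fun c => g c * ψ (c * b)) ψ
    (fun c _ => (ψ.val_isUnit c).ne_zero) (by rwa [hfilter]) fun m hm => ?_
  refine Eq.trans ?_ (hz m hm)
  simp only [mul_assoc, hfilter, mul_add, AddChar.map_add_eq_mul, ← nsmul_eq_mul',
    AddChar.map_nsmul_eq_pow]

theorem zmodChar_mul_apply {n : ℕ} [NeZero n] {R : Type*} [CommMonoid R] {ζ : R} (hζ : ζ ^ n = 1)
    (a b : ZMod n) : AddChar.zmodChar n hζ (a * b) = ζ ^ (a.val * b.val) := by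
  rw [AddChar.zmodChar_apply, ZMod.val_mul, ← pow_eq_pow_mod _ hζ]

end AddChar

section Hypermatrix

theorem hsupp_eq_empty_iff {s : ℕ} {r : Fin s → ℕ} {M : Idx r → F} : hsupp M = ∅ ↔ M = 0 := by
  simp [hsupp, Set.eq_empty_iff_forall_notMem, funext_iff]

theorem hypercol_eq_zero_of_le_runLen {s : ℕ} {r : Fin (s + 1) → ℕ} (M : Idx r → F)
    (k : Fin (s + 1)) (b : ZMod (r k)) {m : ℕ} (hm : m ∈ Finset.Icc 1 (runLen M k b)) :
    hypercol M k (b + (m : ZMod (r k))) = 0 := by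
  by_contra hne
  obtain ⟨hm1, hm⟩ := Finset.mem_Icc.1 hm
  have hle : runLen M k b ≤ (Finset.Ico 1 m).card := by
    refine Finset.card_le_card fun j hj => ?_
    simp only [Finset.mem_filter, Finset.mem_Ico] at hj
    refine Finset.mem_Ico.2 ⟨hj.1.1, ?_⟩
    by_contra! hmj
    exact hne (hj.2 m (Finset.mem_Icc.2 ⟨hm1, hmj⟩))
  rw [Nat.card_Ico] at hle
  omega

theorem apd_congr_hsupp {s : ℕ} (r : Fin s → ℕ) {M N : Idx r → F} (h : hsupp M = hsupp N) :
    apd r M = apd r N := by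
  have hzero : ∀ i, M i = 0 ↔ N i = 0 := fun i => not_iff_not.1 (Set.ext_iff.1 h i)
  clear h
  induction s with
  | zero => simp only [apd, hzero]
  | succ s ih =>
    have hrun : ∀ k b, runLen M k b = runLen N k b := by
      simp only [runLen, hypercol, funext_iff, Pi.zero_apply, hzero, implies_true]
    have hcol : ∀ k b, apd _ (hypercol M k b) = apd _ (hypercol N k b) :=
      fun k b => ih _ fun i => hzero _
    simp only [apd, hrun, hcol]

theorem sum_eq_sum_sum_insertNth {s : ℕ} {r : Fin (s + 1) → ℕ} [∀ k, NeZero (r k)] {M : Type*}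
    [AddCommMonoid M] (k : Fin (s + 1)) (f : Idx r → M) :
    ∑ i, f i = ∑ i : Idx fun j => r (k.succAbove j), ∑ c, f (k.insertNth c i) := by
  rw [← (Fin.insertNthEquiv (fun k => ZMod (r k)) k).sum_comp, Fintype.sum_prod_type,
    Finset.sum_comm]
  rfl

theorem wt_eq_sum_card_lines {s : ℕ} {r : Fin (s + 1) → ℕ} [∀ k, NeZero (r k)]
    (k : Fin (s + 1)) (f : Idx r → F) :
    wt f = ∑ i : Idx fun j => r (k.succAbove j),
      (Finset.univ.filter fun c => f (k.insertNth c i) ≠ 0).card := by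
  simp only [wt, Finset.card_filter]
  exact sum_eq_sum_sum_insertNth k _

end Hypermatrix

section Fourier

variable {s : ℕ} {r : Fin s → ℕ} [∀ k, NeZero (r k)] {α : Fin s → L}

/-- The character `j ↦ α^(ij)` of `∏ Z_{r k}`. Writing its factors as values of
`AddChar.zmodChar` at products in `ZMod (r k)` makes it visibly symmetric and biadditive in
`i` and `j`. -/
def fourierChar (α : Fin s → L) (hα : ∀ k, α k ^ r k = 1) (i : Idx r) : AddChar (Idx r) L where
  toFun j := ∏ k, AddChar.zmodChar (r k) (hα k) (i k * j k)
  map_zero_eq_one' := by simp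
  map_add_eq_mul' j j' := by
    simp only [Pi.add_apply, mul_add, AddChar.map_add_eq_mul, Finset.prod_mul_distrib]

theorem fourierChar_apply (hα : ∀ k, α k ^ r k = 1) (i j : Idx r) :
    fourierChar α hα i j = ∏ k, AddChar.zmodChar (r k) (hα k) (i k * j k) :=
  rfl

theorem fourierChar_comm (hα : ∀ k, α k ^ r k = 1) (i j : Idx r) :
    fourierChar α hα i j = fourierChar α hα j i := by
  simp only [fourierChar_apply, mul_comm]

theorem fourierChar_injective (hα : ∀ k, IsPrimitiveRoot (α k) (r k)) :
    Function.Injective (fourierChar α fun k => (hα k).pow_eq_one) := by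
  intro i i' h
  funext k
  have hsingle (i : Idx r) :
      fourierChar α (fun k => (hα k).pow_eq_one) i (Pi.single k 1) = α k ^ (i k).val := by
    rw [fourierChar_apply, Finset.prod_eq_single k, Pi.single_eq_same, mul_one,
      AddChar.zmodChar_apply]
    · intro l _ hl
      rw [Pi.single_eq_of_ne hl, mul_zero, AddChar.map_zero_eq_one]
    · simp
  refine ZMod.val_injective _ ((hα k).pow_inj (ZMod.val_lt _) (ZMod.val_lt _) ?_)
  rw [← hsingle, h, hsingle]

theorem fourier_apply (hα : ∀ k, α k ^ r k = 1) (f : Idx r → F) (j : Idx r) :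
    fourier α f j = ∑ i, algebraMap F L (f i) * fourierChar α hα i j := by
  simp only [fourier, fourierChar_apply, zmodChar_mul_apply]

theorem fourier_eq_linearCombination (hα : ∀ k, α k ^ r k = 1) (f : Idx r → F) :
    fourier α f = Fintype.linearCombination F (fun i => (fourierChar α hα i : Idx r → L)) f := by
  funext j
  simp [fourier_apply hα, Fintype.linearCombination_apply, Algebra.smul_def]

theorem fourier_injective (hα : ∀ k, IsPrimitiveRoot (α k) (r k)) :
    Function.Injective (fourier α : (Idx r → F) → Idx r → L) := by
  have hLI : LinearIndependent F fun i =>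
      (fourierChar α (fun k => (hα k).pow_eq_one) i : Idx r → L) :=
    ((linearIndependent_addChar (Idx r) L).comp _ (fourierChar_injective hα)).restrict_scalars' F
  intro f g h
  simp only [fourier_eq_linearCombination fun k => (hα k).pow_eq_one] at h
  exact hLI.fintypeLinearCombination_injective h

theorem fourier_eq_zero_iff (hα : ∀ k, IsPrimitiveRoot (α k) (r k)) {f : Idx r → F} :
    fourier α f = 0 ↔ f = 0 := by
  have hzero : fourier α (0 : Idx r → F) = 0 := by
    rw [fourier_eq_linearCombination fun k => (hα k).pow_eq_one, map_zero]
  rw [← hzero, (fourier_injective hα).eq_iff]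

theorem isIntegral_fourier (hα : ∀ k, α k ^ r k = 1) (f : Idx r → F) :
    IsIntegral F (fourier α f) := by
  rw [fourier_eq_linearCombination hα, Fintype.linearCombination_apply]
  exact IsIntegral.sum _ fun i _ => (isIntegral_addChar F _).smul _

theorem fourier_conv (hα : ∀ k, α k ^ r k = 1) (f g : Idx r → F) :
    fourier α (conv f g) = fourier α f * fourier α g := by
  funext j
  simp only [Pi.mul_apply, fourier_apply hα, fourierChar_comm hα _ j]
  set χ := fourierChar α hα j
  calc ∑ i, algebraMap F L (conv f g i) * χ i
      = ∑ i, ∑ u, algebraMap F L (f u) * algebraMap F L (g (i - u)) * χ i := by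
        simp only [conv, map_sum, map_mul, Finset.sum_mul]
    _ = ∑ u, ∑ i, algebraMap F L (f u) * algebraMap F L (g i) * χ (u + i) := by
        rw [Finset.sum_comm]
        refine Finset.sum_congr rfl fun u _ => ?_
        rw [← Equiv.sum_comp (Equiv.addLeft u)]
        simp only [Equiv.coe_addLeft, add_sub_cancel_left]
    _ = (∑ u, algebraMap F L (f u) * χ u) * ∑ i, algebraMap F L (g i) * χ i := by
        simp only [Finset.sum_mul_sum, AddChar.map_add_eq_mul, mul_mul_mul_comm]

end Fourier

section ApparentDistance

variable {s : ℕ}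

/-- The word obtained from `f` by applying the Fourier transform in the `k`-th variable only,
evaluated at the exponent `b` in that variable. -/
def partialFourier {r : Fin (s + 1) → ℕ} [∀ k, NeZero (r k)] (α : Fin (s + 1) → L)
    (f : Idx r → L) (k : Fin (s + 1)) (b : ZMod (r k)) : Idx (fun j => r (k.succAbove j)) → L :=
  fun i => ∑ c, f (k.insertNth c i) * α k ^ (c.val * b.val)

theorem hypercol_fourier {r : Fin (s + 1) → ℕ} [∀ k, NeZero (r k)] (α : Fin (s + 1) → L)
    (f : Idx r → L) (k : Fin (s + 1)) (b : ZMod (r k)) :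
    hypercol (fourier α f) k b =
      fourier (fun j => α (k.succAbove j)) (partialFourier α f k b) := by
  funext j
  simp only [hypercol, fourier, partialFourier, Algebra.algebraMap_self, RingHom.id_apply,
    sum_eq_sum_sum_insertNth k, Fin.prod_univ_succAbove _ k, Fin.insertNth_apply_same,
    Fin.insertNth_apply_succAbove, Finset.sum_mul, mul_assoc]

theorem hypercol_fourier_eq_zero_iff {r : Fin (s + 1) → ℕ} [∀ k, NeZero (r k)]
    {α : Fin (s + 1) → L} (k : Fin (s + 1))
    (hα : ∀ j, IsPrimitiveRoot (α (k.succAbove j)) (r (k.succAbove j))) (f : Idx r → L)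
    (b : ZMod (r k)) : hypercol (fourier α f) k b = 0 ↔ partialFourier α f k b = 0 := by
  rw [hypercol_fourier, fourier_eq_zero_iff hα]

theorem succ_mul_wt_partialFourier_le_wt {r : Fin (s + 1) → ℕ} [∀ k, NeZero (r k)]
    {α : Fin (s + 1) → L} (k : Fin (s + 1)) (hα : α k ^ r k = 1) (f : Idx r → L) (b : ZMod (r k))
    {w : ℕ} (hz : ∀ m ∈ Finset.Icc 1 w, partialFourier α f k (b + (m : ZMod (r k))) = 0) :
    (w + 1) * wt (partialFourier α f k b) ≤ wt f := by
  rw [wt_eq_sum_card_lines k f, wt, mul_comm, ← smul_eq_mul]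
  refine (Finset.card_nsmul_le_sum _ _ _ fun i hi => ?_).trans
    (Finset.sum_le_sum_of_subset (Finset.subset_univ _))
  have hline (b : ZMod (r k)) : partialFourier α f k b i =
      ∑ c, f (k.insertNth c i) * AddChar.zmodChar (r k) hα (c * b) := by
    simp only [partialFourier, zmodChar_mul_apply]
  refine lt_card_support_of_sum_mul_addChar_eq_zero (AddChar.zmodChar (r k) hα)
    (fun c => f (k.insertNth c i)) b ?_ fun m hm => ?_
  · rw [← hline]
    exact (Finset.mem_filter.1 hi).2
  · rw [← hline, hz m hm, Pi.zero_apply]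

theorem apd_fourier_le_wt_of_self (r : Fin s → ℕ) [∀ k, NeZero (r k)] {α : Fin s → L}
    (hα : ∀ k, IsPrimitiveRoot (α k) (r k)) (f : Idx r → L) : apd r (fourier α f) ≤ wt f := by
  induction s with
  | zero =>
    rw [apd]
    split_ifs with h
    · exact Nat.zero_le _
    · obtain ⟨i, hi, hfi⟩ := Finset.exists_ne_zero_of_sum_ne_zero h
      refine Finset.card_pos.2 ⟨i, Finset.mem_filter.2 ⟨hi, ?_⟩⟩
      exact left_ne_zero_of_mul hfi
  | succ s ih =>
    rw [apd]
    refine Finset.sup_le fun k _ => Finset.sup_le fun b _ => ?_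
    generalize ((b : ℕ) : ZMod (r k)) = b
    have hαk (j : Fin s) := hα (k.succAbove j)
    calc (runLen (fourier α f) k b + 1) * apd _ (hypercol (fourier α f) k b)
        ≤ (runLen (fourier α f) k b + 1) * wt (partialFourier α f k b) := by
          rw [hypercol_fourier]
          exact Nat.mul_le_mul_left _ (ih _ hαk _)
      _ ≤ wt f := succ_mul_wt_partialFourier_le_wt k (hα k).pow_eq_one f b fun m hm =>
          (hypercol_fourier_eq_zero_iff k hαk f _).1 (hypercol_eq_zero_of_le_runLen _ k b hm)

theorem apd_fourier_le_wt (r : Fin s → ℕ) [∀ k, NeZero (r k)] {α : Fin s → L}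
    (hα : ∀ k, IsPrimitiveRoot (α k) (r k)) (f : Idx r → F) : apd r (fourier α f) ≤ wt f :=
  calc apd r (fourier α f) = apd r (fourier α fun i => algebraMap F L (f i)) := rfl
    _ ≤ wt fun i => algebraMap F L (f i) := apd_fourier_le_wt_of_self r hα _
    _ = wt f := by simp only [wt, ne_eq, map_eq_zero]

end ApparentDistance

section Code

variable {s : ℕ} {r : Fin s → ℕ} [∀ k, NeZero (r k)] {α : Fin s → L}
  {C : Submodule F (Idx r → F)}

theorem conv_mem (hC : IsAbelianCode C) (f : Idx r → F) {g : Idx r → F} (hg : g ∈ C) :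
    conv f g ∈ C := by
  have hconv : conv f g = ∑ u, f u • fun i => g (i - u) := by
    funext i
    simp [conv]
  rw [hconv]
  exact C.sum_mem fun u _ => C.smul_mem _ (hC g hg u)

theorem exists_mem_fourier_eq_mul_aeval (hα : ∀ k, α k ^ r k = 1) (hC : IsAbelianCode C)
    {f : Idx r → F} (hf : f ∈ C) (p : F[X]) :
    ∃ g ∈ C, fourier α g = fourier α f * aeval (fourier α f) p := by
  induction p using Polynomial.induction_on with
  | C a =>
    refine ⟨a • f, C.smul_mem a hf, ?_⟩
    rw [fourier_eq_linearCombination hα (a • f), map_smul, ← fourier_eq_linearCombination hα,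
      aeval_C, Algebra.smul_def, mul_comm]
  | add p q hp hq =>
    obtain ⟨g, hg, hgp⟩ := hp
    obtain ⟨h, hh, hhq⟩ := hq
    refine ⟨g + h, C.add_mem hg hh, ?_⟩
    rw [fourier_eq_linearCombination hα (g + h), map_add, ← fourier_eq_linearCombination hα,
      ← fourier_eq_linearCombination hα, hgp, hhq, map_add, mul_add]
  | monomial n a hn =>
    obtain ⟨g, hg, hgn⟩ := hn
    refine ⟨conv f g, conv_mem hC f hg, ?_⟩
    simp only [fourier_conv hα, hgn, pow_succ, map_mul, aeval_X]
    ring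

theorem exists_idempotent_mem_hsupp_fourier_eq (hα : ∀ k, IsPrimitiveRoot (α k) (r k))
    (hC : IsAbelianCode C) {f : Idx r → F} (hf : f ∈ C) :
    ∃ e ∈ C, conv e e = e ∧ hsupp (fourier α e) = hsupp (fourier α f) := by
  have hpow (k) := (hα k).pow_eq_one
  obtain ⟨p, hp⟩ := exists_sq_mul_aeval_eq_self (isIntegral_fourier hpow f).isAlgebraic
  obtain ⟨e, he, hep⟩ := exists_mem_fourier_eq_mul_aeval hpow hC hf p
  have hef : fourier α e * fourier α f = fourier α f := by
    linear_combination hp + fourier α f * hep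
  refine ⟨e, he, fourier_injective hα ?_, ?_⟩
  · rw [fourier_conv hpow]
    nth_rw 2 [hep]
    rw [← mul_assoc, hef, hep]
  · ext j
    have hepj := congrFun hep j
    have hefj := congrFun hef j
    simp only [Pi.mul_apply] at hepj hefj
    constructor <;> intro hj h
    · exact hj (by rw [hepj, h, zero_mul])
    · exact hj (by rw [← hefj, h, zero_mul])

theorem dStarAlpha_le_wt (hα : ∀ k, IsPrimitiveRoot (α k) (r k)) (hC : IsAbelianCode C)
    {f : Idx r → F} (hf : f ∈ C) (hf0 : f ≠ 0) : dStarAlpha r α C ≤ wt f := by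
  obtain ⟨e, he, hidem, hef⟩ := exists_idempotent_mem_hsupp_fourier_eq hα hC hf
  have he0 : e ≠ 0 := by
    rwa [ne_eq, ← fourier_eq_zero_iff hα, ← hsupp_eq_empty_iff, hef, hsupp_eq_empty_iff,
      fourier_eq_zero_iff hα]
  calc dStarAlpha r α C ≤ apd r (fourier α e) := Nat.sInf_le ⟨e, he, he0, hidem, rfl⟩
    _ = apd r (fourier α f) := apd_congr_hsupp r hef
    _ ≤ wt f := apd_fourier_le_wt r hα f

theorem dStarAlpha_bot (α : Fin s → L) : dStarAlpha r α (⊥ : Submodule F (Idx r → F)) = 0 := by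
  simp [dStarAlpha]

theorem dStarAlpha_le_dmin (hα : ∀ k, IsPrimitiveRoot (α k) (r k)) (hC : IsAbelianCode C) :
    dStarAlpha r α C ≤ dmin C := by
  rcases eq_or_ne C ⊥ with rfl | hne
  · rw [dStarAlpha_bot]
    exact Nat.zero_le _
  · obtain ⟨f, hf, hf0⟩ := C.exists_mem_ne_zero_of_ne_bot hne
    refine le_csInf ⟨_, f, hf, hf0, rfl⟩ ?_
    rintro _ ⟨g, hg, hg0, rfl⟩
    exact dStarAlpha_le_wt hα hC hg hg0

end Code

theorem apparentDistance_le_minimumDistance_general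
    {s : ℕ} (r : Fin s → ℕ) [∀ k, NeZero (r k)]
    {F : Type*} [Field F] (L : Type*) [Field L] [Algebra F L]
    (hroots : ∀ k, ∃ ζ : L, IsPrimitiveRoot ζ (r k))
    (C : Submodule F (Idx r → F)) (hC : IsAbelianCode C) :
    dStarCode r L C ≤ dmin C := by
  choose ζ hζ using hroots
  refine csSup_le ⟨_, ζ, hζ, rfl⟩ ?_
  rintro _ ⟨α, hα, rfl⟩
  exact dStarAlpha_le_dmin hα hC

/-- **Camion.** For any abelian code `C` in `A_q(r_1,…,r_s)`, the
apparent distance of `C` is a lower bound for its minimum distance: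
`d*(C) ≤ d(C)`. -/
theorem apparentDistance_le_minimumDistance
    {s : ℕ} (r : Fin s → ℕ) [∀ k, NeZero (r k)] (hs : 0 < s)
    {F : Type*} [Field F] [Fintype F]
    (hcop : ∀ k, (Fintype.card F).Coprime (r k))
    (L : Type*) [Field L] [Algebra F L]
    (hroots : ∀ k, ∃ ζ : L, IsPrimitiveRoot ζ (r k))
    (C : Submodule F (Idx r → F)) (hC : IsAbelianCode C) :
    dStarCode r L C ≤ dmin C :=
  apparentDistance_le_minimumDistance_general r L hroots C hC

end AbelianCodes
end
end

section
/- Let M = M(D) be the q^t-orbits hypermatrix afforded by a union D of q^t-orbits, let k ∈ {1,…,s} and b ∈ Z_{r_k}, and set t' = t·|C_{q^t}(b)|, where C_{q^t}(b) = {b·q^{ti} mod r_k : i ∈ ℕ} is the q^t-cyclotomic coset of b modulo r_k. Then the set I(k,b) = {i ∈ I : i(k) = b} is closed under multiplication by q^{t'}, the set D_M(k,b) = I(k,b) \ supp(H_M(k,b)) is a union of q^{t'}-orbits, and the hypercolumn H_M(k,b), viewed as an (s−1)-dimensional hypermatrix indexed by ∏_{j≠k} Z_{r_j}, is the q^{t'}-orbits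 hypermatrix afforded by D_M(k,b). -/
open Classical

noncomputable section

namespace AbelianCodes

variable {F : Type*} [Field F]

/-!
Multiplication by `q ^ t` is injective on `Z_{r k}`, so the `q ^ t`-cyclotomic coset of `b` has
exactly as many elements as the minimal period of `b` under it, and `q ^ t'` fixes `b`. Multiplying
an index with `k`-th coordinate `b` by a power of `q ^ t'` therefore leaves that coordinate alone,
and `D`, being closed under `q ^ t`, is also closed under `q ^ t'`: closure passes to the slice of
`D` at `b`.
-/

section Iterate

open Function

variable {α : Type*} {f : α → α} {x : α}

theorem ncard_range_iterate_of_mem_periodicPts (hx : x ∈ periodicPts f) :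
    (Set.range fun n => f^[n] x).ncard = minimalPeriod f x := by
  have range_eq : (Set.range fun n => f^[n] x) =
      (fun n => f^[n] x) '' Set.Iio (minimalPeriod f x) := by
    refine (Set.range_subset_iff.2 fun n => ?_).antisymm (Set.image_subset_range _ _)
    exact ⟨n % minimalPeriod f x, Nat.mod_lt _ (minimalPeriod_pos_of_mem_periodicPts hx),
      iterate_mod_minimalPeriod_eq⟩
  rw [range_eq, iterate_injOn_Iio_minimalPeriod.ncard_image, Set.ncard_Iio_nat]

theorem injective_iterate_of_notMem_periodicPts (hf : Injective f) (hx : x ∉ periodicPts f) :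
    Injective fun n => f^[n] x :=
  .of_lt_imp_ne fun _ _ hmn heq =>
    hx ⟨_, Nat.sub_pos_of_lt hmn, iterate_cancel hf heq.symm⟩

-- A point that is not periodic has infinitely many iterates, so both sides take the value `0`.
theorem ncard_range_iterate_eq_minimalPeriod (hf : Injective f) (x : α) :
    (Set.range fun n => f^[n] x).ncard = minimalPeriod f x := by
  by_cases hx : x ∈ periodicPts f
  · exact ncard_range_iterate_of_mem_periodicPts hx
  · rw [minimalPeriod_eq_zero_of_notMem_periodicPts hx]
    exact (Set.infinite_range_of_injective (injective_iterate_of_notMem_periodicPts hf hx)).ncard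

theorem pow_mul_eq_self {M : Type*} [Monoid M] {a b : M} (hb : a * b = b) (n : ℕ) :
    a ^ n * b = b := by
  rw [← mul_left_iterate_apply]
  exact iterate_fixed hb n

end Iterate

section CyclotomicCoset

variable {r q : ℕ}

theorem cycCoset_eq_range_iterate (t : ℕ) (b : ZMod r) :
    cycCoset r q t b = Set.range fun n => ((q : ZMod r) ^ t * ·)^[n] b := by
  ext x
  simp only [cycCoset, Set.mem_ofPred_eq, Set.mem_range, mul_left_iterate_apply, ← pow_mul, eq_comm]

theorem ncard_cycCoset (hqr : q.Coprime r) (t : ℕ) (b : ZMod r) :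
    (cycCoset r q t b).ncard = Function.minimalPeriod ((q : ZMod r) ^ t * ·) b := by
  have hinj : Function.Injective ((q : ZMod r) ^ t * ·) :=
    (((ZMod.isUnit_iff_coprime q r).2 hqr).pow t).mul_right_injective
  rw [cycCoset_eq_range_iterate, ncard_range_iterate_eq_minimalPeriod hinj]

theorem pow_mul_ncard_cycCoset_mul (hqr : q.Coprime r) (t : ℕ) (b : ZMod r) :
    (q : ZMod r) ^ (t * (cycCoset r q t b).ncard) * b = b := by
  rw [ncard_cycCoset hqr, pow_mul, ← mul_left_iterate_apply, Function.iterate_minimalPeriod]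

end CyclotomicCoset

section OrbitUnion

variable {s q t : ℕ}

theorem OrbitUnion.mul_right {r : Fin s → ℕ} {D : Set (Idx r)} (hD : OrbitUnion r q t D) (m : ℕ) :
    OrbitUnion r q (t * m) D := by
  rintro a ha i ⟨n, hn⟩
  exact hD a ha ⟨m * n, fun j => by rw [hn j, mul_assoc]⟩

variable {r : Fin (s + 1) → ℕ} {k : Fin (s + 1)} {b : ZMod (r k)}

theorem insertNth_mem_qOrbit {a i : Idx fun j => r (k.succAbove j)}
    (hb : (q : ZMod (r k)) ^ t * b = b) (hi : i ∈ qOrbit (fun j => r (k.succAbove j)) q t a) :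
    k.insertNth b i ∈ qOrbit r q t (k.insertNth b a) := by
  obtain ⟨n, hn⟩ := hi
  refine ⟨n, k.forall_iff_succAbove.2 ⟨?_, fun j => ?_⟩⟩
  · simp only [Fin.insertNth_apply_same, pow_mul, pow_mul_eq_self hb]
  · simpa only [Fin.insertNth_apply_succAbove] using hn j

theorem OrbitUnion.preimage_insertNth {D : Set (Idx r)} (hD : OrbitUnion r q t D)
    (hb : (q : ZMod (r k)) ^ t * b = b) :
    OrbitUnion (fun j => r (k.succAbove j)) q t {i | k.insertNth b i ∈ D} :=
  fun _ ha _ hi => hD _ ha (insertNth_mem_qOrbit hb hi)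

end OrbitUnion

theorem hypercol_of_orbit_hypermatrix_general
    {s : ℕ} {r : Fin (s + 1) → ℕ} {q t : ℕ} {D : Set (Idx r)} (hD : OrbitUnion r q t D)
    {k : Fin (s + 1)} (hqr : q.Coprime (r k)) (b : ZMod (r k)) :
    (∀ n : ℕ, (q : ZMod (r k)) ^ (t * (cycCoset (r k) q t b).ncard * n) * b = b) ∧
    OrbitUnion (fun j => r (k.succAbove j)) q (t * (cycCoset (r k) q t b).ncard)
      {i | k.insertNth b i ∈ D} ∧
    hypercol (afforded r D : Idx r → F) k b =
      afforded (fun j => r (k.succAbove j)) {i | k.insertNth b i ∈ D} := by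
  have hb := pow_mul_ncard_cycCoset_mul hqr t b
  exact ⟨fun n => by rw [pow_mul, pow_mul_eq_self hb], (hD.mul_right _).preimage_insertNth hb, rfl⟩

/-- Let `M = M(D)` be the `q^t`-orbits hypermatrix afforded by a
union `D` of `q^t`-orbits, `k ∈ {1,…,s}`, `b ∈ Z_{r_k}`, and
`t' = t·|C_{q^t}(b)|`.  Then `I(k,b)` is closed under multiplication by `q^{t'}`,
the set `D_M(k,b) = I(k,b) \ supp(H_M(k,b))` (identified with the set
`{i : i(k ↦ b extension) ∈ D}` of `(s−1)`-tuples) is a union of `q^{t'}`-orbits,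
and the hypercolumn `H_M(k,b)` is the `q^{t'}`-orbits hypermatrix afforded by it. -/
theorem hypercol_of_orbit_hypermatrix
    {s : ℕ} (r : Fin (s+1) → ℕ)
    (p q t : ℕ) (hp : p.Prime) (hq : ∃ m : ℕ, 0 < m ∧ q = p ^ m) (ht : 0 < t)
    (hr : ∀ k, 0 < r k) (hpr : ∀ k, ¬ p ∣ r k)
    {F : Type*} [Field F]
    (D : Set (Idx r)) (hD : OrbitUnion r q t D)
    (k : Fin (s+1)) (b : ZMod (r k)) :
    (∀ n : ℕ, (q : ZMod (r k)) ^ (t * (cycCoset (r k) q t b).ncard * n) * b = b) ∧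
    OrbitUnion (fun j => r (k.succAbove j)) q (t * (cycCoset (r k) q t b).ncard)
      {i | k.insertNth b i ∈ D} ∧
    hypercol (afforded r D : Idx r → F) k b =
      afforded (fun j => r (k.succAbove j)) {i | k.insertNth b i ∈ D} := by
  obtain ⟨m, -, rfl⟩ := hq
  exact hypercol_of_orbit_hypermatrix_general hD
    ((hp.coprime_iff_not_dvd.2 (hpr k)).pow_left m) b

end AbelianCodes
end
end

section
/- Let M be a nonzero q^t-orbits hypermatrix, k ∈ {1,…,s}, b ∈ Z_{r_k}, and let A be an (s−1)-dimensional hypermatrix indexed by ∏_{j≠k} Z_{r_j} such that supp(A) ⊆ supp(H_M(k,b)). Then there exists a q^t-orbits hypermatrix N ≤ M such that: (1) supp(H_N(k,b)) ⊆ supp(A); (2) if P < M is a q^t-orbits hypermatrix with supp(H_P(k,b)) ⊆ supp(A), then P ≤ N; and (3) if A is a q^{t·|C_{q^t}(b)|}-orbits hypermatrix, where C_{q^t}(b) is the q^t-cyclotomic coset of b modulo r_k, then A = H_N(k,b). Hence N is the q^t-orbits hypermatrix with maximum support such that supp(H_N(k,b)) ⊆ supp(A). -/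
open Classical

noncomputable section

namespace AbelianCodes

variable {F : Type*} [Field F]

/-!
The zeros forced upon `N` are those of `M` together with the `q^t`-orbits of the zeros of `A`,
placed in the hyperplane `i k = b`. Forcing no others gives the maximal `N`. An orbit that starts in
this hyperplane is back in it only after a multiple of `|C_{q^t}(b)|` steps, and there it has moved
along a `q^{t·|C_{q^t}(b)|}`-orbit of the hypercolumn. So if the zeros of `A` are a union of such
orbits, closing them up under `q^t` creates no new zero in the hypercolumn.
-/

theorem ncard_range_iterate_dvd_minimalPeriod {α : Type*} (f : α → α) (x : α) :
    (Set.range fun n ↦ f^[n] x).ncard ∣ Function.minimalPeriod f x := by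
  by_cases hx : x ∈ Function.periodicPts f
  · have hrange : (Set.range fun n ↦ f^[n] x) =
        (fun n ↦ f^[n] x) '' Set.Iio (Function.minimalPeriod f x) := by
      refine Set.Subset.antisymm ?_ (Set.image_subset_range _ _)
      rintro _ ⟨n, rfl⟩
      exact ⟨n % Function.minimalPeriod f x,
        Nat.mod_lt _ (Function.minimalPeriod_pos_of_mem_periodicPts hx),
        Function.iterate_mod_minimalPeriod_eq⟩
    rw [hrange, Function.iterate_injOn_Iio_minimalPeriod.ncard_image]
    simp
  · simp [Function.minimalPeriod_eq_zero_of_notMem_periodicPts hx]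

theorem ncard_cycCoset_dvd_minimalPeriod (r q t : ℕ) (b : ZMod r) :
    (cycCoset r q t b).ncard ∣ Function.minimalPeriod ((q : ZMod r) ^ t * ·) b := by
  have hcoset : cycCoset r q t b = Set.range fun n ↦ ((q : ZMod r) ^ t * ·)^[n] b := by
    ext x
    simp [cycCoset, mul_left_iterate, pow_mul, eq_comm]
  rw [hcoset]
  exact ncard_range_iterate_dvd_minimalPeriod _ b

section OrbitClosure

variable {s : ℕ} {r : Fin s → ℕ} {q t : ℕ} {a i : Idx r} {D E S : Set (Idx r)}

theorem self_mem_qOrbit : a ∈ qOrbit r q t a :=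
  ⟨0, by simp⟩

theorem orbitUnion_qOrbit : OrbitUnion r q t (qOrbit r q t a) := by
  rintro i ⟨m, hm⟩ j ⟨n, hn⟩
  refine ⟨n + m, fun l ↦ ?_⟩
  rw [hn, hm, mul_add, pow_add, mul_assoc]

theorem OrbitUnion.union (hD : OrbitUnion r q t D) (hE : OrbitUnion r q t E) :
    OrbitUnion r q t (D ∪ E) :=
  fun a ha ↦ ha.elim (fun h ↦ (hD a h).trans Set.subset_union_left)
    (fun h ↦ (hE a h).trans Set.subset_union_right)

variable (r q t) in
/-- The smallest union of `q^t`-orbits containing `S`. -/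
def orbitClosure (S : Set (Idx r)) : Set (Idx r) :=
  ⋃ a ∈ S, qOrbit r q t a

theorem subset_orbitClosure : S ⊆ orbitClosure r q t S :=
  fun _ ha ↦ Set.mem_biUnion ha self_mem_qOrbit

theorem orbitUnion_orbitClosure : OrbitUnion r q t (orbitClosure r q t S) := by
  intro i hi
  obtain ⟨a, ha, hia⟩ := Set.mem_iUnion₂.1 hi
  exact (orbitUnion_qOrbit i hia).trans (Set.subset_biUnion_of_mem ha)

theorem OrbitUnion.orbitClosure_subset (hD : OrbitUnion r q t D) (hSD : S ⊆ D) :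
    orbitClosure r q t S ⊆ D :=
  Set.iUnion₂_subset fun a ha ↦ hD a (hSD ha)

end OrbitClosure

section OrbitMx

variable {s : ℕ} {r : Fin s → ℕ} {q t : ℕ} {M : Idx r → F}

@[simp]
theorem hsupp_afforded (D : Set (Idx r)) : hsupp (afforded (F := F) r D) = Dᶜ := by
  ext i
  simp [hsupp, afforded]

theorem IsOrbitMx.orbitUnion_compl_hsupp (hM : IsOrbitMx r q t M) :
    OrbitUnion r q t (hsupp M)ᶜ := by
  obtain ⟨D, hD, rfl⟩ := hM
  simpa using hD

theorem IsOrbitMx.afforded_compl_hsupp (hM : IsOrbitMx r q t M) :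
    afforded r (hsupp M)ᶜ = M := by
  obtain ⟨D, -, rfl⟩ := hM
  simp

end OrbitMx

section Hypercolumn

variable {s : ℕ} {r : Fin (s + 1) → ℕ} {q t m : ℕ} {k : Fin (s + 1)} {b : ZMod (r k)}

/-- The inclusion of the index set of a hypercolumn into `I`, with image the hyperplane
`I(k,b) = {i | i k = b}`. -/
def hypercolEmb (k : Fin (s + 1)) (b : ZMod (r k)) (c : Idx fun j ↦ r (k.succAbove j)) : Idx r :=
  k.insertNth b c

theorem hsupp_hypercol (M : Idx r → F) :
    hsupp (hypercol M k b) = hypercolEmb k b ⁻¹' hsupp M :=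
  rfl

theorem hypercol_afforded (D : Set (Idx r)) :
    hypercol (afforded (F := F) r D) k b = afforded _ (hypercolEmb k b ⁻¹' D) :=
  rfl

theorem mem_qOrbit_of_hypercolEmb_mem_qOrbit {a c : Idx fun j ↦ r (k.succAbove j)}
    (hm : m ∣ Function.minimalPeriod ((q : ZMod (r k)) ^ t * ·) b)
    (h : hypercolEmb k b c ∈ qOrbit r q t (hypercolEmb k b a)) :
    c ∈ qOrbit _ q (t * m) a := by
  obtain ⟨n, hn⟩ := h
  have hreturn : Function.IsPeriodicPt ((q : ZMod (r k)) ^ t * ·) n b := by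
    simpa [hypercolEmb, Function.IsPeriodicPt, Function.IsFixedPt, mul_left_iterate, pow_mul]
      using (hn k).symm
  obtain ⟨d, rfl⟩ := hm.trans hreturn.minimalPeriod_dvd
  exact ⟨d, fun j ↦ by simpa [hypercolEmb, mul_assoc] using hn (k.succAbove j)⟩

theorem preimage_hypercolEmb_orbitClosure_image {E : Set (Idx fun j ↦ r (k.succAbove j))}
    (hm : m ∣ Function.minimalPeriod ((q : ZMod (r k)) ^ t * ·) b)
    (hE : OrbitUnion _ q (t * m) E) :
    hypercolEmb k b ⁻¹' orbitClosure r q t (hypercolEmb k b '' E) = E := by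
  refine Set.Subset.antisymm (fun c hc ↦ ?_) (Set.image_subset_iff.1 subset_orbitClosure)
  obtain ⟨_, ⟨a, ha, rfl⟩, hca⟩ := Set.mem_iUnion₂.1 hc
  exact hE a ha (mem_qOrbit_of_hypercolEmb_mem_qOrbit hm hca)

end Hypercolumn

section MaxOrbitMx

variable {s : ℕ} {r : Fin (s + 1) → ℕ} {q t m : ℕ} {M P : Idx r → F}
  {k : Fin (s + 1)} {b : ZMod (r k)} {A : Idx (fun j ↦ r (k.succAbove j)) → F}

variable (r q t) in
/-- The largest `q^t`-orbits hypermatrix `N ≤ M` with `supp(H_N(k,b)) ⊆ supp(A)`, for a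
`q^t`-orbits hypermatrix `M`. It is given by its zeros. -/
def maxOrbitMx (M : Idx r → F) (k : Fin (s + 1)) (b : ZMod (r k))
    (A : Idx (fun j ↦ r (k.succAbove j)) → F) : Idx r → F :=
  afforded r ((hsupp M)ᶜ ∪ orbitClosure r q t (hypercolEmb k b '' (hsupp A)ᶜ))

theorem hsupp_maxOrbitMx :
    hsupp (maxOrbitMx r q t M k b A) =
      hsupp M \ orbitClosure r q t (hypercolEmb k b '' (hsupp A)ᶜ) := by
  rw [maxOrbitMx, hsupp_afforded, Set.compl_union, compl_compl, Set.sdiff_eq]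

theorem isOrbitMx_maxOrbitMx (hM : IsOrbitMx r q t M) :
    IsOrbitMx r q t (maxOrbitMx r q t M k b A) :=
  ⟨_, hM.orbitUnion_compl_hsupp.union orbitUnion_orbitClosure, rfl⟩

theorem hsupp_maxOrbitMx_subset : hsupp (maxOrbitMx r q t M k b A) ⊆ hsupp M :=
  hsupp_maxOrbitMx.trans_subset Set.sdiff_subset

theorem hsupp_hypercol_maxOrbitMx_subset :
    hsupp (hypercol (maxOrbitMx r q t M k b A) k b) ⊆ hsupp A := by
  rw [hsupp_hypercol, hsupp_maxOrbitMx]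
  intro c hc
  by_contra hcA
  exact hc.2 (subset_orbitClosure ⟨c, hcA, rfl⟩)

theorem IsOrbitMx.hsupp_subset_maxOrbitMx (hP : IsOrbitMx r q t P) (hPM : hsupp P ⊆ hsupp M)
    (hPA : hsupp (hypercol P k b) ⊆ hsupp A) :
    hsupp P ⊆ hsupp (maxOrbitMx r q t M k b A) := by
  have hzeros : hypercolEmb k b '' (hsupp A)ᶜ ⊆ (hsupp P)ᶜ :=
    Set.image_subset_iff.2 (Set.compl_subset_compl.2 hPA)
  have hclosure := hP.orbitUnion_compl_hsupp.orbitClosure_subset hzeros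
  rw [hsupp_maxOrbitMx]
  exact fun i hi ↦ ⟨hPM hi, fun hmem ↦ hclosure hmem hi⟩

theorem hypercol_maxOrbitMx (hm : m ∣ Function.minimalPeriod ((q : ZMod (r k)) ^ t * ·) b)
    (hAM : hsupp A ⊆ hsupp (hypercol M k b)) (hA : IsOrbitMx _ q (t * m) A) :
    hypercol (maxOrbitMx r q t M k b A) k b = A := by
  have hzeros : hypercolEmb k b ⁻¹' (hsupp M)ᶜ ⊆ (hsupp A)ᶜ := Set.compl_subset_compl.2 hAM
  rw [maxOrbitMx, hypercol_afforded, Set.preimage_union,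
    preimage_hypercolEmb_orbitClosure_image hm hA.orbitUnion_compl_hsupp,
    Set.union_eq_self_of_subset_left hzeros, hA.afforded_compl_hsupp]

end MaxOrbitMx

/-- If `q` is prime to `r k`, the minimal period of `b` under multiplication by `q^t` is
`|C_{q^t}(b)|`. It is `0` when the iterates of `b` never return to `b`, and then every `m` divides
it. -/
theorem exists_max_support_hypermatrix_general
    {s : ℕ} (r : Fin (s + 1) → ℕ) (q t : ℕ)
    {F : Type*} [Field F]
    (M : Idx r → F) (hM : IsOrbitMx r q t M)
    (k : Fin (s + 1)) (b : ZMod (r k))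
    (A : Idx (fun j ↦ r (k.succAbove j)) → F)
    (hA : hsupp A ⊆ hsupp (hypercol M k b)) :
    ∃ N : Idx r → F, IsOrbitMx r q t N ∧ hsupp N ⊆ hsupp M ∧
      hsupp (hypercol N k b) ⊆ hsupp A ∧
      (∀ P : Idx r → F, IsOrbitMx r q t P → hsupp P ⊆ hsupp M →
        hsupp (hypercol P k b) ⊆ hsupp A → hsupp P ⊆ hsupp N) ∧
      (∀ m : ℕ, m ∣ Function.minimalPeriod ((q : ZMod (r k)) ^ t * ·) b →
        IsOrbitMx (fun j ↦ r (k.succAbove j)) q (t * m) A → A = hypercol N k b) :=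
  ⟨maxOrbitMx r q t M k b A, isOrbitMx_maxOrbitMx hM, hsupp_maxOrbitMx_subset,
    hsupp_hypercol_maxOrbitMx_subset, fun _ ↦ IsOrbitMx.hsupp_subset_maxOrbitMx,
    fun _ hm hAorb ↦ (hypercol_maxOrbitMx hm hA hAorb).symm⟩

/-- Let `M` be a nonzero `q^t`-orbits hypermatrix, `k`, `b`, and
let `A` be an `(s−1)`-dimensional hypermatrix with `supp(A) ⊆ supp(H_M(k,b))`.
Then there is a `q^t`-orbits hypermatrix `N ≤ M` such that
(1) `supp(H_N(k,b)) ⊆ supp(A)`;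
(2) if `P < M` is a `q^t`-orbits hypermatrix with `supp(H_P(k,b)) ⊆ supp(A)` then
`P ≤ N`; and
(3) if `A` is a `q^{t·|C_{q^t}(b)|}`-orbits hypermatrix then `A = H_N(k,b)`. -/
theorem exists_max_support_hypermatrix
    {s : ℕ} (r : Fin (s+1) → ℕ)
    (p q t : ℕ) (hp : p.Prime) (hq : ∃ m : ℕ, 0 < m ∧ q = p ^ m) (ht : 0 < t)
    (hr : ∀ k, 0 < r k) (hpr : ∀ k, ¬ p ∣ r k)
    {F : Type*} [Field F]
    (M : Idx r → F) (hM : IsOrbitMx r q t M) (hM0 : M ≠ 0)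
    (k : Fin (s+1)) (b : ZMod (r k))
    (A : Idx (fun j => r (k.succAbove j)) → F)
    (hA : hsupp A ⊆ hsupp (hypercol M k b)) :
    ∃ N : Idx r → F, IsOrbitMx r q t N ∧ hsupp N ⊆ hsupp M ∧
      hsupp (hypercol N k b) ⊆ hsupp A ∧
      (∀ P : Idx r → F, IsOrbitMx r q t P → hsupp P ⊂ hsupp M →
        hsupp (hypercol P k b) ⊆ hsupp A → hsupp P ⊆ hsupp N) ∧
      (IsOrbitMx (fun j => r (k.succAbove j)) q (t * (cycCoset (r k) q t b).ncard) A →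
        A = hypercol N k b) := by
  obtain ⟨N, hN, hNM, hNA, hmax, hcol⟩ := exists_max_support_hypermatrix_general r q t M hM k b A hA
  exact ⟨N, hN, hNM, hNA, fun P hP hPM ↦ hmax P hP hPM.subset,
    hcol _ (ncard_cycCoset_dvd_minimalPeriod _ q t b)⟩

end AbelianCodes
end
end
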